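/- With the setup of ≤_O: for w, w' ∈ W(I,J,K), the following are equivalent: (i) w' <_O w; (ii) there exist u ∈ Min(w) and u' in the coset w' W_K W_{I,J} with u' < u in Bruhat order; (iii) for every u ∈ Min(w), there exists u' in w' W_K W_{I,J} with u' < u. -/

import Mathlib

section BruhatSetup

variable {B : Type*} {W : Type*} [Group W] {M : CoxeterMatrix B}

/-- Strong Bruhat order: `u ≤ v` iff every reduced word for `v` has a sublist
that is a reduced word for `u`. -/
def BruhatLE (cs : CoxeterSystem M W) (u v : W) : Prop :=
  ∀ ω : List B, cs.IsReduced ω → cs.wordProd ω = v →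
    ∃ ω' : List B, List.Sublist ω' ω ∧ cs.IsReduced ω' ∧ cs.wordProd ω' = u

/-- Strict strong Bruhat order. -/
def BruhatLT (cs : CoxeterSystem M W) (u v : W) : Prop :=
  BruhatLE cs u v ∧ u ≠ v

/-- The standard parabolic subgroup `W_L` generated by the simple reflections in `L`. -/
def parab (cs : CoxeterSystem M W) (L : Set B) : Subgroup W :=
  Subgroup.closure (cs.simple '' L)

/-- The set `W^L` of minimal length coset representatives for `W / W_L`. -/
def minReps (cs : CoxeterSystem M W) (L : Set B) : Set W :=
  {w : W | ∀ i ∈ L, cs.length w < cs.length (w * cs.simple i)}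

/-- Right weak order: `v ≤_R w` iff `ℓ(w) = ℓ(w v⁻¹) + ℓ(v)`. -/
def leR (cs : CoxeterSystem M W) (v w : W) : Prop :=
  cs.length w = cs.length (w * v⁻¹) + cs.length v

/-- The setup of the order `≤_O`: `I`, `J`, `K` are pairwise disjoint and pairwise
disconnected subsets of the simple system (so that `W_{I∪J∪K} = W_I × W_J × W_K`),
and `σ : x ↦ x*` restricts to an isomorphism of Coxeter groups `W_I → W_J`
(a bijective group homomorphism sending simple reflections to simple reflections). -/
structure GoodSetup (cs : CoxeterSystem M W) (I J K : Set B) (σ : W → W) : Prop where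
  disjIJ : Disjoint I J
  disjIK : Disjoint I K
  disjJK : Disjoint J K
  commIJ : ∀ i ∈ I, ∀ j ∈ J, Commute (cs.simple i) (cs.simple j)
  commIK : ∀ i ∈ I, ∀ k ∈ K, Commute (cs.simple i) (cs.simple k)
  commJK : ∀ j ∈ J, ∀ k ∈ K, Commute (cs.simple j) (cs.simple k)
  directProd : ∀ x ∈ parab cs I, ∀ y ∈ parab cs J, ∀ z ∈ parab cs K,
    x * y * z = 1 → x = 1 ∧ y = 1 ∧ z = 1
  mulSigma : ∀ x ∈ parab cs I, ∀ y ∈ parab cs I, σ (x * y) = σ x * σ y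
  bijSigma : Set.BijOn σ (parab cs I : Set W) (parab cs J : Set W)
  simpleSigma : ∀ i ∈ I, ∃ j ∈ J, σ (cs.simple i) = cs.simple j

/-- Membership in the coset `[w] = w · W_K · W_{I,J}` where `W_{I,J} = {x x* : x ∈ W_I}`. -/
def inCoset (cs : CoxeterSystem M W) (I K : Set B) (σ : W → W) (w u : W) : Prop :=
  ∃ a ∈ parab cs K, ∃ x ∈ parab cs I, u = w * a * (x * σ x)

/-- The relation `≤_O`: `w' ≤_O w` iff some `u ∈ [w']` satisfies `u ≤ w` in Bruhat order. -/
def leO (cs : CoxeterSystem M W) (I K : Set B) (σ : W → W) (w' w : W) : Prop :=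
  ∃ u, inCoset cs I K σ w' u ∧ BruhatLE cs u w

/-- The strict relation associated to `≤_O`. -/
def ltO (cs : CoxeterSystem M W) (I K : Set B) (σ : W → W) (w' w : W) : Prop :=
  leO cs I K σ w' w ∧ w' ≠ w

/-- `Min(w)`: the elements of the coset `[w]` of length `ℓ(w)`. -/
def MinC (cs : CoxeterSystem M W) (I K : Set B) (σ : W → W) (w : W) : Set W :=
  {u : W | inCoset cs I K σ w u ∧ cs.length u = cs.length w}

/-- The set `M` of all elements having minimal length in their coset mod `W_K W_{I,J}`. -/
def Mset (cs : CoxeterSystem M W) (I J K : Set B) (σ : W → W) : Set W :=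
  {u : W | ∃ w ∈ minReps cs (J ∪ K), u ∈ MinC cs I K σ w}

/-! The representation of `W` on `W × ZMod 2` in which `s` conjugates the first entry and flips the
second one exactly when the first is `s` yields a cocycle detecting inversions; the exchange
condition, the subword property and the behaviour of minimal coset representatives all follow
from it.

For the theorem, an element `w ∈ W^{J ∪ K}` stays in `W^{J ∪ K}` after right multiplication by
`x ∈ W_I`, so `w a x x*` has length `ℓ(w x) + ℓ(x) + ℓ(a)`. Hence `Min(w)` consists of the elements
`p (x*)⁻¹` where `w = p x` is a length-additive factorization with `x ∈ W_I`. Elements below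
`p x` are products `a b` with `a ≤ p` and `b ≤ x`, and `a b ↦ a (b*)⁻¹` matches them, within cosets
of `W_{I,J}`, with the elements below `p (x*)⁻¹`. So `leO w' u` does not depend on `u ∈ Min(w)`. -/

section InversionParity

open CoxeterSystem

lemma reverse_alternatingWord_two_mul (i j : B) (m : ℕ) :
    (alternatingWord i j (2 * m)).reverse = alternatingWord j i (2 * m) := by
  induction m with
  | zero => rfl
  | succ m ih =>
    have hcons : alternatingWord j i (2 * (m + 1)) = j :: i :: alternatingWord j i (2 * m) := by
      rw [mul_add_one, alternatingWord_succ', alternatingWord_succ']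
      simp [parity_simps]
    rw [hcons, mul_add_one, alternatingWord_succ, alternatingWord_succ]
    simp [ih]

lemma prod_map_alternatingWord_two_mul {G : Type*} [Monoid G] (f : B → G) (i j : B) (m : ℕ) :
    ((alternatingWord i j (2 * m)).map f).prod = (f i * f j) ^ m := by
  induction m with
  | zero => simp [alternatingWord]
  | succ m ih =>
    rw [mul_add_one, alternatingWord_succ, alternatingWord_succ, pow_succ, ← ih]
    simp

variable (cs : CoxeterSystem M W)

open Classical in
lemma even_count_rightInvSeq_alternatingWord (i j : B) (t : W) :
    Even ((cs.rightInvSeq (alternatingWord i j (2 * M i j))).count t) := by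
  set L := cs.leftInvSeq (alternatingWord j i (2 * M i j)) with hL
  have hlen : L.length = 2 * M i j := by simp [hL]
  have hperiod : L.drop (M i j) = L.take (M i j) := by
    refine List.ext_getElem (by rw [List.length_drop, List.length_take]; omega) fun k h₁ h₂ ↦ ?_
    have hk : k < M i j := by
      rw [List.length_take, lt_min_iff] at h₂
      exact h₂.1
    simp only [List.getElem_drop, List.getElem_take, hL]
    rw [cs.getElem_leftInvSeq_alternatingWord _ _ _ _ (by omega),
      cs.getElem_leftInvSeq_alternatingWord _ _ _ _ (by omega),
      prod_alternatingWord_eq_mul_pow, prod_alternatingWord_eq_mul_pow]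
    have hdiv : (2 * (M i j + k) + 1) / 2 = M i j + k := by omega
    have hdiv' : (2 * k + 1) / 2 = k := by omega
    simp [hdiv, hdiv', pow_add, cs.simple_mul_simple_pow, parity_simps]
  rw [← reverse_alternatingWord_two_mul, cs.rightInvSeq_reverse, List.count_reverse, ← hL,
    ← List.take_append_drop (M i j) L, hperiod, List.count_append]
  exact ⟨_, rfl⟩

open Classical in
/-- The action of a simple reflection `s` on `W × ZMod 2` underlying the cocycle
`inversionParity`: it conjugates the first entry and flips the second one if the first is `s`.
It is defined on all of `W` rather than on the reflections only. -/
noncomputable def reflectionFlip (i : B) : Function.End (W × ZMod 2) := fun p ↦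
  (cs.simple i * p.1 * cs.simple i, p.2 + if p.1 = cs.simple i then 1 else 0)

open Classical in
lemma reflectionFlip_smul (i : B) (t : W) (e : ZMod 2) :
    reflectionFlip cs i • (t, e) =
      (cs.simple i * t * cs.simple i, e + if t = cs.simple i then 1 else 0) := rfl

open Classical in
lemma prod_map_reflectionFlip_smul (ω : List B) (t : W) (e : ZMod 2) :
    (ω.map (reflectionFlip cs)).prod • (t, e) =
      (cs.wordProd ω * t * (cs.wordProd ω)⁻¹, e + ((cs.rightInvSeq ω).count t : ZMod 2)) := by
  induction ω with
  | nil => simp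
  | cons i ω ih =>
    have hconj : cs.wordProd ω * t * (cs.wordProd ω)⁻¹ = cs.simple i ↔
        (cs.wordProd ω)⁻¹ * cs.simple i * cs.wordProd ω = t := by
      rw [mul_inv_eq_iff_eq_mul, mul_assoc, inv_mul_eq_iff_eq_mul, eq_comm]
    rw [List.map_cons, List.prod_cons, mul_smul, ih, reflectionFlip_smul]
    simp only [hconj, rightInvSeq, List.count_cons, beq_iff_eq, Nat.cast_add, Nat.cast_ite,
      Nat.cast_one, Nat.cast_zero, add_assoc]
    simp only [wordProd_cons, mul_inv_rev, inv_simple, mul_assoc]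

lemma isLiftable_reflectionFlip : M.IsLiftable (reflectionFlip cs) := by
  classical
  intro i j
  funext ⟨t, e⟩
  change (reflectionFlip cs i * reflectionFlip cs j) ^ M i j • (t, e) = (t, e)
  rw [← prod_map_alternatingWord_two_mul, prod_map_reflectionFlip_smul,
    (ZMod.natCast_eq_zero_iff_even).mpr (even_count_rightInvSeq_alternatingWord cs i j t),
    prod_alternatingWord_eq_mul_pow]
  simp [cs.simple_mul_simple_pow]

/-- The representation of `W` on `W × ZMod 2` extending `reflectionFlip`. -/
noncomputable def reflectionFlipHom : W →* Function.End (W × ZMod 2) :=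
  cs.lift ⟨reflectionFlip cs, isLiftable_reflectionFlip cs⟩

/-- The inversion cocycle: for a reflection `t`, it is `1` if `t` is a right inversion of `w` and
`0` otherwise. -/
noncomputable def inversionParity (w t : W) : ZMod 2 :=
  (reflectionFlipHom cs w • (t, (0 : ZMod 2))).2

open Classical in
lemma reflectionFlipHom_wordProd_smul (ω : List B) (t : W) (e : ZMod 2) :
    reflectionFlipHom cs (cs.wordProd ω) • (t, e) =
      (cs.wordProd ω * t * (cs.wordProd ω)⁻¹, e + ((cs.rightInvSeq ω).count t : ZMod 2)) := by
  rw [← prod_map_reflectionFlip_smul, wordProd, map_list_prod, List.map_map]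
  congr! 3
  exact funext fun i ↦ cs.lift_apply_simple (isLiftable_reflectionFlip cs) i

open Classical in
lemma inversionParity_wordProd (ω : List B) (t : W) :
    inversionParity cs (cs.wordProd ω) t = (cs.rightInvSeq ω).count t := by
  rw [inversionParity, reflectionFlipHom_wordProd_smul, zero_add]

lemma reflectionFlipHom_smul (w t : W) (e : ZMod 2) :
    reflectionFlipHom cs w • (t, e) = (w * t * w⁻¹, e + inversionParity cs w t) := by
  classical
  obtain ⟨ω, rfl⟩ := cs.wordProd_surjective w
  rw [inversionParity_wordProd, reflectionFlipHom_wordProd_smul]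

@[simp]
lemma inversionParity_one (t : W) : inversionParity cs 1 t = 0 := by
  simp [inversionParity]

lemma inversionParity_mul (v w t : W) :
    inversionParity cs (v * w) t =
      inversionParity cs w t + inversionParity cs v (w * t * w⁻¹) := by
  rw [inversionParity, map_mul, mul_smul, reflectionFlipHom_smul,
    reflectionFlipHom_smul, zero_add]

open Classical in
lemma inversionParity_simple (i : B) (t : W) :
    inversionParity cs (cs.simple i) t = if cs.simple i = t then 1 else 0 := by
  simpa [List.count_singleton] using inversionParity_wordProd cs [i] t

lemma inversionParity_self {t : W} (ht : cs.IsReflection t) :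
    inversionParity cs t t = 1 := by
  obtain ⟨v, i, rfl⟩ := ht
  set t := v * cs.simple i * v⁻¹ with ht
  have hconj : v⁻¹ * t * v⁻¹⁻¹ = cs.simple i := by simp [ht, mul_assoc]
  have hcancel : inversionParity cs v⁻¹ t + inversionParity cs v (cs.simple i) = 0 := by
    rw [← hconj, ← inversionParity_mul, mul_inv_cancel, inversionParity_one]
  calc inversionParity cs t t
      = inversionParity cs v⁻¹ t + (1 + inversionParity cs v (cs.simple i)) := by
        rw [ht, inversionParity_mul, ← ht, hconj, inversionParity_mul, inversionParity_simple]
        simp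
    _ = 1 := by rw [add_left_comm, hcancel, add_zero]

end InversionParity

section Exchange

open CoxeterSystem

variable (cs : CoxeterSystem M W)

lemma isRightInversion_iff_inversionParity_ne_zero {t : W} (ht : cs.IsReflection t) (w : W) :
    cs.IsRightInversion w t ↔ inversionParity cs w t ≠ 0 := by
  classical
  have of_ne_zero (v : W) (hv : inversionParity cs v t ≠ 0) : cs.IsRightInversion v t := by
    obtain ⟨ω, hω, rfl⟩ := cs.exists_isReduced v
    rw [inversionParity_wordProd] at hv
    refine cs.isRightInversion_of_mem_rightInvSeq hω ?_
    by_contra hmem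
    simp [List.count_eq_zero_of_not_mem hmem] at hv
  refine ⟨fun h hzero ↦ ht.isRightInversion_mul_left_iff.mp (of_ne_zero (w * t) ?_) h, of_ne_zero w⟩
  rw [inversionParity_mul, inversionParity_self cs ht, mul_inv_cancel_right, hzero]
  decide

lemma mem_rightInvSeq_of_isRightInversion {ω : List B} {t : W}
    (h : cs.IsRightInversion (cs.wordProd ω) t) : t ∈ cs.rightInvSeq ω := by
  classical
  by_contra hmem
  refine (isRightInversion_iff_inversionParity_ne_zero cs h.1 _).mp h ?_
  simp [inversionParity_wordProd, List.count_eq_zero_of_not_mem hmem]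

lemma exists_wordProd_mul_eq_wordProd_eraseIdx {ω : List B} {t : W}
    (h : cs.IsRightInversion (cs.wordProd ω) t) :
    ∃ j < ω.length, cs.wordProd ω * t = cs.wordProd (ω.eraseIdx j) := by
  obtain ⟨j, hj, rfl⟩ := List.mem_iff_getElem.mp (mem_rightInvSeq_of_isRightInversion cs h)
  refine ⟨j, by simpa using hj, ?_⟩
  rw [← cs.wordProd_mul_getD_rightInvSeq, List.getD_eq_getElem]

lemma isRightInversion_mul_simple {w t : W} {i : B} (h : cs.IsRightInversion w t)
    (hne : t ≠ cs.simple i) :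
    cs.IsRightInversion (w * cs.simple i) (cs.simple i * t * cs.simple i) := by
  classical
  have hconj : cs.IsReflection (cs.simple i * t * cs.simple i) := by
    simpa using h.1.conj (cs.simple i)
  have hne' : cs.simple i ≠ cs.simple i * t * cs.simple i := by
    rw [mul_assoc, ne_comm, ne_eq, mul_eq_left, mul_eq_one_iff_eq_inv, cs.inv_simple]
    exact hne
  rw [isRightInversion_iff_inversionParity_ne_zero cs hconj, inversionParity_mul,
    inversionParity_simple, if_neg hne', zero_add]
  simpa [mul_assoc] using (isRightInversion_iff_inversionParity_ne_zero cs h.1 w).mp h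

lemma exists_isReduced_sublist (ω : List B) :
    ∃ ω' : List B, ω'.Sublist ω ∧ cs.IsReduced ω' ∧ cs.wordProd ω' = cs.wordProd ω := by
  induction ω using List.reverseRecOn with
  | nil => exact ⟨[], .refl _, by simp [CoxeterSystem.IsReduced], rfl⟩
  | append_singleton ω i ih =>
    obtain ⟨η, hsub, hred, hprod⟩ := ih
    have hmul : cs.wordProd (ω ++ [i]) = cs.wordProd η * cs.simple i := by
      rw [wordProd_append, wordProd_singleton, hprod]
    rcases cs.length_mul_simple (cs.wordProd η) i with hasc | hdesc
    · have hmul' : cs.wordProd (η ++ [i]) = cs.wordProd η * cs.simple i := by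
        rw [wordProd_append, wordProd_singleton]
      refine ⟨η ++ [i], hsub.append (.refl _), ?_, hmul'.trans hmul.symm⟩
      rw [CoxeterSystem.IsReduced, hmul', hasc, hred.eq, List.length_append, List.length_singleton]
    · obtain ⟨j, hj, hdel⟩ := exists_wordProd_mul_eq_wordProd_eraseIdx cs
        (ω := η) ⟨cs.isReflection_simple i, by omega⟩
      refine ⟨η.eraseIdx j, ?_, ?_, by rw [← hdel, hmul]⟩
      · exact ((List.eraseIdx_sublist ..).trans hsub).trans (List.sublist_append_left ..)
      · rw [CoxeterSystem.IsReduced, ← hdel, List.length_eraseIdx_of_lt hj, ← hred.eq]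
        omega

end Exchange

section Bruhat

open CoxeterSystem Relation

/-- One downward step in the Bruhat graph: `x = y t` for a right inversion `t` of `y`. -/
def BruhatStep (cs : CoxeterSystem M W) (x y : W) : Prop :=
  ∃ t, cs.IsRightInversion y t ∧ x = y * t

variable {cs : CoxeterSystem M W}

lemma BruhatStep.mul_simple {x y : W} (h : BruhatStep cs x y) (i : B) :
    x * cs.simple i = y ∨ BruhatStep cs (x * cs.simple i) (y * cs.simple i) := by
  obtain ⟨t, ht, rfl⟩ := h
  by_cases hti : t = cs.simple i
  · left
    rw [hti, simple_mul_simple_cancel_right]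
  · exact .inr ⟨_, isRightInversion_mul_simple cs ht hti, by simp [mul_assoc]⟩

lemma reflTransGen_bruhatStep_mul_simple {x y : W} {i : B}
    (hasc : BruhatStep cs y (y * cs.simple i)) (h : ReflTransGen (BruhatStep cs) x y) :
    ReflTransGen (BruhatStep cs) (x * cs.simple i) (y * cs.simple i) := by
  induction h using ReflTransGen.head_induction_on with
  | refl => exact .refl
  | head hstep hchain ih =>
    rcases hstep.mul_simple i with heq | hstep'
    · rw [heq]
      exact hchain.tail hasc
    · exact ih.head hstep'

lemma reflTransGen_bruhatStep_of_sublist {ω ω' : List B} (hω : cs.IsReduced ω)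
    (hsub : ω'.Sublist ω) :
    ReflTransGen (BruhatStep cs) (cs.wordProd ω') (cs.wordProd ω) := by
  induction ω using List.reverseRecOn generalizing ω' with
  | nil => rw [List.sublist_nil.mp hsub]
  | append_singleton ω i ih =>
    have hinit : cs.IsReduced ω := by simpa using hω.take ω.length
    have hasc : BruhatStep cs (cs.wordProd ω) (cs.wordProd ω * cs.simple i) := by
      refine ⟨cs.simple i, ⟨cs.isReflection_simple i, ?_⟩, by simp⟩
      rw [simple_mul_simple_cancel_right, ← wordProd_singleton, ← wordProd_append, hω.eq, hinit.eq]
      simp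
    obtain ⟨α, β, rfl, hα, hβ⟩ := List.sublist_append_iff.mp hsub
    rw [wordProd_append cs ω, wordProd_singleton]
    rcases List.sublist_singleton.mp hβ with rfl | rfl
    · simpa using (ih hinit hα).tail hasc
    · simpa [wordProd_append] using reflTransGen_bruhatStep_mul_simple hasc (ih hinit hα)

lemma exists_sublist_of_reflTransGen_bruhatStep {x : W} {ω : List B}
    (h : ReflTransGen (BruhatStep cs) x (cs.wordProd ω)) :
    ∃ ω' : List B, ω'.Sublist ω ∧ cs.wordProd ω' = x := by
  induction h using ReflTransGen.head_induction_on with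
  | refl => exact ⟨ω, .refl _, rfl⟩
  | head hstep _ ih =>
    obtain ⟨η, hη, rfl⟩ := ih
    obtain ⟨t, ht, rfl⟩ := hstep
    obtain ⟨j, -, hdel⟩ := exists_wordProd_mul_eq_wordProd_eraseIdx cs ht
    exact ⟨η.eraseIdx j, (List.eraseIdx_sublist ..).trans hη, hdel.symm⟩

lemma bruhatLE_of_sublist {ω ω' : List B} (hω : cs.IsReduced ω) (hsub : ω'.Sublist ω) :
    BruhatLE cs (cs.wordProd ω') (cs.wordProd ω) := by
  intro η _ hη
  obtain ⟨ξ, hξη, hξ⟩ := exists_sublist_of_reflTransGen_bruhatStep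
    (hη.symm ▸ reflTransGen_bruhatStep_of_sublist hω hsub)
  obtain ⟨ζ, hζξ, hζ, hprod⟩ := exists_isReduced_sublist cs ξ
  exact ⟨ζ, hζξ.trans hξη, hζ, hprod.trans hξ⟩

lemma isReduced_append_of_length_mul {α β : List B} (hα : cs.IsReduced α) (hβ : cs.IsReduced β)
    (h : cs.length (cs.wordProd α * cs.wordProd β) =
      cs.length (cs.wordProd α) + cs.length (cs.wordProd β)) :
    cs.IsReduced (α ++ β) := by
  rw [CoxeterSystem.IsReduced, wordProd_append, h, hα.eq, hβ.eq, List.length_append]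

lemma BruhatLE.mul {a b p x : W} (ha : BruhatLE cs a p) (hb : BruhatLE cs b x)
    (h : cs.length (p * x) = cs.length p + cs.length x) : BruhatLE cs (a * b) (p * x) := by
  obtain ⟨ω, hω, rfl⟩ := cs.exists_isReduced p
  obtain ⟨ξ, hξ, rfl⟩ := cs.exists_isReduced x
  obtain ⟨α, hαω, -, rfl⟩ := ha ω hω rfl
  obtain ⟨β, hβξ, -, rfl⟩ := hb ξ hξ rfl
  rw [← wordProd_append, ← wordProd_append]
  exact bruhatLE_of_sublist (isReduced_append_of_length_mul hω hξ h) (hαω.append hβξ)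

lemma BruhatLE.exists_eq_mul {u p x : W} (hu : BruhatLE cs u (p * x))
    (h : cs.length (p * x) = cs.length p + cs.length x) :
    ∃ a b, BruhatLE cs a p ∧ BruhatLE cs b x ∧ u = a * b := by
  obtain ⟨ω, hω, rfl⟩ := cs.exists_isReduced p
  obtain ⟨ξ, hξ, rfl⟩ := cs.exists_isReduced x
  obtain ⟨ζ, hζ, -, rfl⟩ :=
    hu (ω ++ ξ) (isReduced_append_of_length_mul hω hξ h) (cs.wordProd_append ω ξ)
  obtain ⟨α, β, rfl, hα, hβ⟩ := List.sublist_append_iff.mp hζ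
  exact ⟨_, _, bruhatLE_of_sublist hω hα, bruhatLE_of_sublist hξ hβ, cs.wordProd_append α β⟩

lemma BruhatLE.inv {u v : W} (h : BruhatLE cs u v) : BruhatLE cs u⁻¹ v⁻¹ := by
  obtain ⟨ω, hω, rfl⟩ := cs.exists_isReduced v
  obtain ⟨ω', hsub, -, rfl⟩ := h ω hω rfl
  rw [← wordProd_reverse, ← wordProd_reverse]
  exact bruhatLE_of_sublist hω.reverse hsub.reverse

lemma BruhatLT.length_lt {u v : W} (h : BruhatLT cs u v) : cs.length u < cs.length v := by
  obtain ⟨ω, hω, rfl⟩ := cs.exists_isReduced v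
  obtain ⟨ω', hsub, hω', rfl⟩ := h.1 ω hω rfl
  rw [hω.eq, hω'.eq]
  exact hsub.length_le.lt_of_ne fun hlen ↦ h.2 (by rw [hsub.eq_of_length hlen])

end Bruhat

section Parabolic

open CoxeterSystem

variable {cs : CoxeterSystem M W} {L : Set B}

lemma simple_mem_parab {i : B} (hi : i ∈ L) : cs.simple i ∈ parab cs L :=
  Subgroup.subset_closure ⟨i, hi, rfl⟩

lemma wordProd_mem_parab {ω : List B} (hω : ∀ i ∈ ω, i ∈ L) : cs.wordProd ω ∈ parab cs L :=
  list_prod_mem (by simpa using fun i hi ↦ simple_mem_parab (hω i hi))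

lemma exists_isReduced_of_mem_parab {x : W} (hx : x ∈ parab cs L) :
    ∃ ω : List B, (∀ i ∈ ω, i ∈ L) ∧ cs.IsReduced ω ∧ cs.wordProd ω = x := by
  obtain ⟨ω, hω, rfl⟩ : ∃ ω : List B, (∀ i ∈ ω, i ∈ L) ∧ cs.wordProd ω = x := by
    induction hx using Subgroup.closure_induction with
    | mem _ h =>
      obtain ⟨i, hi, rfl⟩ := h
      exact ⟨[i], by simpa using hi, cs.wordProd_singleton i⟩
    | one => exact ⟨[], by simp, cs.wordProd_nil⟩
    | mul _ _ _ _ ihx ihy =>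
      obtain ⟨α, hα, rfl⟩ := ihx
      obtain ⟨β, hβ, rfl⟩ := ihy
      exact ⟨α ++ β, by simpa [or_imp, forall_and] using ⟨hα, hβ⟩, cs.wordProd_append α β⟩
    | inv _ _ ih =>
      obtain ⟨α, hα, rfl⟩ := ih
      exact ⟨α.reverse, by simpa using hα, cs.wordProd_reverse α⟩
  obtain ⟨η, hsub, hη, hprod⟩ := exists_isReduced_sublist cs ω
  exact ⟨η, fun i hi ↦ hω i (hsub.subset hi), hη, hprod⟩

lemma mem_parab_of_bruhatLE {x y : W} (hle : BruhatLE cs x y) (hy : y ∈ parab cs L) :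
    x ∈ parab cs L := by
  obtain ⟨ω, hωL, hω, rfl⟩ := exists_isReduced_of_mem_parab hy
  obtain ⟨ω', hsub, -, rfl⟩ := hle ω hω rfl
  exact wordProd_mem_parab fun i hi ↦ hωL i (hsub.subset hi)

lemma commute_of_mem_parab {L' : Set B}
    (hcomm : ∀ i ∈ L, ∀ j ∈ L', Commute (cs.simple i) (cs.simple j)) {x y : W}
    (hx : x ∈ parab cs L) (hy : y ∈ parab cs L') : Commute x y := by
  obtain ⟨α, hα, -, rfl⟩ := exists_isReduced_of_mem_parab hx
  obtain ⟨β, hβ, -, rfl⟩ := exists_isReduced_of_mem_parab hy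
  refine Commute.list_prod_left _ _ fun a ha ↦ Commute.list_prod_right _ _ fun b hb ↦ ?_
  obtain ⟨i, hi, rfl⟩ := List.mem_map.mp ha
  obtain ⟨j, hj, rfl⟩ := List.mem_map.mp hb
  exact hcomm i (hα i hi) j (hβ j hj)

lemma length_mul_of_forall_length_le {v y : W}
    (hv : ∀ z ∈ parab cs L, cs.length v ≤ cs.length (v * z)) (hy : y ∈ parab cs L) :
    cs.length (v * y) = cs.length v + cs.length y := by
  obtain ⟨ω, hω, rfl⟩ := cs.exists_isReduced v
  obtain ⟨η, hηL, -, rfl⟩ := exists_isReduced_of_mem_parab hy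
  obtain ⟨ζ, hsub, hζ, hprod⟩ := exists_isReduced_sublist cs (ω ++ η)
  obtain ⟨α, β, rfl, hα, hβ⟩ := List.sublist_append_iff.mp hsub
  rw [wordProd_append, wordProd_append] at hprod
  have hβL : cs.wordProd β ∈ parab cs L := wordProd_mem_parab fun i hi ↦ hηL i (hβ.subset hi)
  have hαω : α = ω := by
    refine hα.eq_of_length_le ?_
    calc ω.length = cs.length (cs.wordProd ω) := hω.eq.symm
      _ ≤ cs.length (cs.wordProd ω * (cs.wordProd η * (cs.wordProd β)⁻¹)) :=
        hv _ (mul_mem hy (inv_mem hβL))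
      _ = cs.length (cs.wordProd α) := by rw [← mul_assoc, ← hprod, mul_inv_cancel_right]
      _ ≤ α.length := cs.length_wordProd_le α
  rw [hαω] at hprod hζ
  refine (cs.length_mul_le _ _).antisymm ?_
  calc cs.length (cs.wordProd ω) + cs.length (cs.wordProd η)
      = ω.length + cs.length (cs.wordProd β) := by rw [hω.eq, mul_left_cancel hprod]
    _ ≤ (ω ++ β).length := by
      rw [List.length_append]
      exact Nat.add_le_add_left (cs.length_wordProd_le β) _
    _ = cs.length (cs.wordProd ω * cs.wordProd η) := by rw [← hζ.eq, wordProd_append, hprod]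

lemma exists_mul_forall_length_le (cs : CoxeterSystem M W) (L : Set B) (w : W) :
    ∃ y ∈ parab cs L, ∀ z ∈ parab cs L, cs.length (w * y) ≤ cs.length (w * y * z) := by
  obtain ⟨y, hy, hmin⟩ := exists_minimalFor_of_wellFoundedLT (· ∈ parab cs L)
    (fun y ↦ cs.length (w * y)) ⟨1, one_mem _⟩
  refine ⟨y, hy, fun z hz ↦ ?_⟩
  rw [mul_assoc]
  exact (le_total _ _).elim id (hmin (mul_mem hy hz))

lemma length_mul_of_mem_minReps {w y : W} (hw : w ∈ minReps cs L) (hy : y ∈ parab cs L) :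
    cs.length (w * y) = cs.length w + cs.length y := by
  refine length_mul_of_forall_length_le ?_ hy
  obtain ⟨z, hz, hmin⟩ := exists_mul_forall_length_le cs L w
  obtain ⟨η, hηL, hη, hηz⟩ := exists_isReduced_of_mem_parab (inv_mem hz)
  have hw_eq : w = w * z * cs.wordProd η := by rw [hηz, mul_inv_cancel_right]
  rcases List.eq_nil_or_concat η with rfl | ⟨η, i, rfl⟩
  · rw [wordProd_nil, mul_one] at hw_eq
    rwa [← hw_eq] at hmin
  · rw [List.concat_eq_append] at hηL hη hηz hw_eq
    have hasc := hw i (hηL i (by simp))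
    have hlen : cs.length w = cs.length (w * z) + (η.length + 1) := by
      conv_lhs => rw [hw_eq]
      rw [length_mul_of_forall_length_le hmin (hηz ▸ inv_mem hz), hη.eq]
      simp
    have hshort : w * cs.simple i = w * z * cs.wordProd η := by
      conv_lhs => rw [hw_eq]
      simp [wordProd_append, mul_assoc]
    have hle := cs.length_mul_le (w * z) (cs.wordProd η)
    rw [← hshort] at hle
    have hle' := cs.length_wordProd_le η
    omega

lemma mem_minReps_iff_inversionParity_eq_zero {w : W} :
    w ∈ minReps cs L ↔ ∀ i ∈ L, inversionParity cs w (cs.simple i) = 0 := by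
  refine forall₂_congr fun i _ ↦ ?_
  rw [← not_iff_not, ← ne_eq (inversionParity _ _ _),
    ← isRightInversion_iff_inversionParity_ne_zero cs (cs.isReflection_simple i),
    isRightInversion_simple_iff_isRightDescent, isRightDescent_iff]
  have := cs.length_mul_simple w i
  omega

lemma mul_mem_minReps {w x : W} (hw : w ∈ minReps cs L) (hx : x ∈ minReps cs L)
    (hcomm : ∀ i ∈ L, Commute x (cs.simple i)) : w * x ∈ minReps cs L := by
  rw [mem_minReps_iff_inversionParity_eq_zero] at hw hx ⊢
  intro i hi
  rw [inversionParity_mul, (hcomm i hi).mul_inv_cancel, hx i hi, hw i hi, add_zero]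

lemma mem_minReps_of_mem_parab {L' : Set B} {x : W} (hx : x ∈ parab cs L)
    (hL' : ∀ i ∈ L', cs.simple i ∉ parab cs L) : x ∈ minReps cs L' := by
  intro i hi
  obtain ⟨ω, hωL, -, rfl⟩ := exists_isReduced_of_mem_parab hx
  refine lt_of_le_of_ne (not_lt.mp fun hdesc ↦ hL' i hi ?_) (cs.length_mul_simple_ne _ i).symm
  obtain ⟨j, -, hdel⟩ :=
    exists_wordProd_mul_eq_wordProd_eraseIdx cs ⟨cs.isReflection_simple i, hdesc⟩
  rw [eq_inv_mul_of_mul_eq hdel]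
  exact mul_mem (inv_mem hx)
    (wordProd_mem_parab fun k hk ↦ hωL k ((List.eraseIdx_sublist ..).subset hk))

end Parabolic

namespace GoodSetup

open CoxeterSystem

variable {cs : CoxeterSystem M W} {I J K : Set B} {σ : W → W}

section Isomorphism

lemma map_one (h : GoodSetup cs I J K σ) : σ 1 = 1 := by
  simpa using h.mulSigma 1 (one_mem _) 1 (one_mem _)

lemma map_inv (h : GoodSetup cs I J K σ) {x : W} (hx : x ∈ parab cs I) : σ x⁻¹ = (σ x)⁻¹ := by
  rw [eq_inv_iff_mul_eq_one, ← h.mulSigma _ (inv_mem hx) _ hx, inv_mul_cancel, h.map_one]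

lemma map_wordProd_map (h : GoodSetup cs I J K σ) (f g : B → B) {ω : List B}
    (hω : ∀ i ∈ ω, f i ∈ I ∧ σ (cs.simple (f i)) = cs.simple (g i)) :
    σ (cs.wordProd (ω.map f)) = cs.wordProd (ω.map g) := by
  induction ω with
  | nil => simpa using h.map_one
  | cons i ω ih =>
    obtain ⟨⟨hi, hσi⟩, hω⟩ := List.forall_mem_cons.mp hω
    have hmem : cs.wordProd (ω.map f) ∈ parab cs I :=
      wordProd_mem_parab (by simpa using fun j hj ↦ (hω j hj).1)
    rw [List.map_cons, List.map_cons, wordProd_cons, wordProd_cons,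
      h.mulSigma _ (simple_mem_parab hi) _ hmem, hσi, ih hω]

lemma exists_indexMap (h : GoodSetup cs I J K σ) :
    ∃ f : B → B, (∀ i ∈ I, σ (cs.simple i) = cs.simple (f i)) ∧
      ∀ ω : List B, (∀ i ∈ ω, i ∈ I) → σ (cs.wordProd ω) = cs.wordProd (ω.map f) := by
  choose! f _ hf using h.simpleSigma
  refine ⟨f, hf, fun ω hω ↦ ?_⟩
  simpa using h.map_wordProd_map id f fun i hi ↦ ⟨hω i hi, hf i (hω i hi)⟩

lemma exists_map_simple_eq (h : GoodSetup cs I J K σ) {j : B} (hj : j ∈ J) :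
    ∃ i ∈ I, σ (cs.simple i) = cs.simple j := by
  obtain ⟨f, hf, hσ⟩ := h.exists_indexMap
  obtain ⟨x, hx, hxj⟩ := h.bijSigma.surjOn (simple_mem_parab hj : cs.simple j ∈ parab cs J)
  obtain ⟨ω, hω, -, rfl⟩ := exists_isReduced_of_mem_parab hx
  obtain ⟨ζ, hsub, hζ, hprod⟩ := exists_isReduced_sublist cs (ω.map f)
  rw [← hσ ω hω, hxj] at hprod
  obtain ⟨k, rfl⟩ : ∃ k, ζ = [k] := by
    rw [← List.length_eq_one_iff, ← hζ.eq, hprod, length_simple]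
  obtain ⟨i, hi, rfl⟩ := List.mem_map.mp (hsub.subset (List.mem_singleton_self k))
  exact ⟨i, hω i hi, by rw [hf i (hω i hi), ← hprod, wordProd_singleton]⟩

lemma length_map (h : GoodSetup cs I J K σ) {x : W} (hx : x ∈ parab cs I) :
    cs.length (σ x) = cs.length x := by
  apply le_antisymm
  · obtain ⟨f, -, hσ⟩ := h.exists_indexMap
    obtain ⟨ω, hωI, hω, rfl⟩ := exists_isReduced_of_mem_parab hx
    rw [hσ ω hωI, hω.eq, ← ω.length_map f]
    exact cs.length_wordProd_le _
  · choose! g hgI hg using fun j hj ↦ h.exists_map_simple_eq (j := j) hj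
    obtain ⟨η, hηJ, hη, hηx⟩ := exists_isReduced_of_mem_parab (h.bijSigma.mapsTo hx)
    have hmem : cs.wordProd (η.map g) ∈ parab cs I :=
      wordProd_mem_parab (by simpa using fun j hj ↦ hgI j (hηJ j hj))
    have hσ : σ (cs.wordProd (η.map g)) = σ x := by
      rw [← hηx]
      simpa using h.map_wordProd_map g id fun j hj ↦ ⟨hgI j (hηJ j hj), hg j (hηJ j hj)⟩
    rw [← h.bijSigma.injOn hmem hx hσ, hσ, ← hηx, hη.eq, ← η.length_map g]
    exact cs.length_wordProd_le _

lemma bruhatLE_map_iff (h : GoodSetup cs I J K σ) {x y : W} (hx : x ∈ parab cs I) :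
    BruhatLE cs y (σ x) ↔ ∃ b ∈ parab cs I, BruhatLE cs b x ∧ σ b = y := by
  obtain ⟨f, -, hσ⟩ := h.exists_indexMap
  obtain ⟨ω, hωI, hω, rfl⟩ := exists_isReduced_of_mem_parab hx
  have sublist_mem {β : List B} (hβ : β.Sublist ω) : ∀ i ∈ β, i ∈ I :=
    fun i hi ↦ hωI i (hβ.subset hi)
  have hσω : cs.IsReduced (ω.map f) := by
    rw [CoxeterSystem.IsReduced, ← hσ ω hωI, h.length_map hx, hω.eq, List.length_map]
  constructor
  · intro hy
    obtain ⟨η, hη, -, rfl⟩ := hy _ hσω (hσ ω hωI).symm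
    obtain ⟨β, hβ, rfl⟩ := List.sublist_map_iff.mp hη
    exact ⟨cs.wordProd β, wordProd_mem_parab (sublist_mem hβ), bruhatLE_of_sublist hω hβ,
      hσ β (sublist_mem hβ)⟩
  · rintro ⟨b, -, hb, rfl⟩
    obtain ⟨β, hβ, -, rfl⟩ := hb ω hω rfl
    rw [hσ ω hωI, hσ β (sublist_mem hβ)]
    exact bruhatLE_of_sublist hσω (hβ.map f)

end Isomorphism

section Coset

lemma commute_map (h : GoodSetup cs I J K σ) {x y : W} (hx : x ∈ parab cs I)
    (hy : y ∈ parab cs I) : Commute x (σ y) :=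
  commute_of_mem_parab h.commIJ hx (h.bijSigma.mapsTo hy)

lemma commute_mul_map (h : GoodSetup cs I J K σ) {a x : W} (ha : a ∈ parab cs K)
    (hx : x ∈ parab cs I) : Commute a (x * σ x) :=
  (commute_of_mem_parab h.commIK hx ha).symm.mul_right
    (commute_of_mem_parab h.commJK (h.bijSigma.mapsTo hx) ha).symm

lemma mul_map_mul (h : GoodSetup cs I J K σ) {x y : W} (hx : x ∈ parab cs I)
    (hy : y ∈ parab cs I) : x * y * σ (x * y) = x * σ x * (y * σ y) := by
  rw [h.mulSigma x hx y hy]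
  exact (h.commute_map hy hx).mul_mul_mul_comm x (σ y)

/-- The subgroup `W_K W_{I,J}`, whose left cosets are the classes `[w]`. -/
def cosetSubgroup (h : GoodSetup cs I J K σ) : Subgroup W where
  carrier := {g | ∃ a ∈ parab cs K, ∃ x ∈ parab cs I, g = a * (x * σ x)}
  one_mem' := ⟨1, one_mem _, 1, one_mem _, by simp [h.map_one]⟩
  mul_mem' := by
    rintro _ _ ⟨a, ha, x, hx, rfl⟩ ⟨b, hb, y, hy, rfl⟩
    refine ⟨a * b, mul_mem ha hb, x * y, mul_mem hx hy, ?_⟩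
    rw [h.mul_map_mul hx hy]
    exact (h.commute_mul_map hb hx).symm.mul_mul_mul_comm a _
  inv_mem' := by
    rintro _ ⟨a, ha, x, hx, rfl⟩
    refine ⟨a⁻¹, inv_mem ha, x⁻¹, inv_mem hx, ?_⟩
    rw [(h.commute_mul_map ha hx).eq, (h.commute_map hx hx).eq, h.map_inv hx, mul_inv_rev,
      mul_inv_rev]

lemma inCoset_iff (h : GoodSetup cs I J K σ) {w u : W} :
    inCoset cs I K σ w u ↔ w⁻¹ * u ∈ h.cosetSubgroup := by
  refine exists_congr fun a ↦ and_congr_right fun _ ↦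
    exists_congr fun x ↦ and_congr_right fun _ ↦ ?_
  rw [inv_mul_eq_iff_eq_mul, mul_assoc]

lemma inCoset_refl (h : GoodSetup cs I J K σ) (w : W) : inCoset cs I K σ w w := by
  rw [h.inCoset_iff, inv_mul_cancel]
  exact one_mem _

lemma inCoset_mul_map (h : GoodSetup cs I J K σ) {w u x : W} (hu : inCoset cs I K σ w u)
    (hx : x ∈ parab cs I) : inCoset cs I K σ w (u * (x * σ x)) := by
  rw [h.inCoset_iff] at hu ⊢
  rw [← mul_assoc]
  exact mul_mem hu ⟨1, one_mem _, x, hx, (one_mul _).symm⟩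

lemma inCoset_of_inCoset (h : GoodSetup cs I J K σ) {w w' u : W} (hu : inCoset cs I K σ w u)
    (hu' : inCoset cs I K σ w' u) : inCoset cs I K σ w w' := by
  rw [h.inCoset_iff] at hu hu' ⊢
  simpa [mul_assoc] using mul_mem hu (inv_mem hu')

lemma simple_notMem_parab_left (h : GoodSetup cs I J K σ) {i : B} (hi : i ∈ J ∪ K) :
    cs.simple i ∉ parab cs I := by
  intro hmem
  have hne : cs.simple i ≠ 1 := by simp [← cs.length_eq_zero_iff]
  rcases hi with hi | hi
  · exact hne (h.directProd _ hmem _ (simple_mem_parab hi) 1 (one_mem _) (by simp)).1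
  · exact hne (h.directProd _ hmem 1 (one_mem _) _ (simple_mem_parab hi) (by simp)).1

lemma simple_notMem_parab_middle (h : GoodSetup cs I J K σ) {i : B} (hi : i ∈ K) :
    cs.simple i ∉ parab cs J := by
  intro hmem
  have hone := h.directProd 1 (one_mem _) _ hmem _ (simple_mem_parab hi) (by simp)
  simpa [hone.2.1] using cs.length_simple i

lemma mul_mem_minReps (h : GoodSetup cs I J K σ) {w x : W} (hw : w ∈ minReps cs (J ∪ K))
    (hx : x ∈ parab cs I) : w * x ∈ minReps cs (J ∪ K) := by
  refine _root_.mul_mem_minReps hw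
    (mem_minReps_of_mem_parab hx fun i hi ↦ h.simple_notMem_parab_left hi) ?_
  rintro i (hi | hi)
  · exact commute_of_mem_parab h.commIJ hx (simple_mem_parab hi)
  · exact commute_of_mem_parab h.commIK hx (simple_mem_parab hi)

lemma length_mul_mul_map (h : GoodSetup cs I J K σ) {w a x : W} (hw : w ∈ minReps cs (J ∪ K))
    (ha : a ∈ parab cs K) (hx : x ∈ parab cs I) :
    cs.length (w * a * (x * σ x)) = cs.length (w * x) + cs.length x + cs.length a := by
  have hσx : σ x ∈ parab cs J := h.bijSigma.mapsTo hx
  have hmem : σ x * a ∈ parab cs (J ∪ K) := mul_mem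
    (Subgroup.closure_mono (Set.image_mono Set.subset_union_left) hσx)
    (Subgroup.closure_mono (Set.image_mono Set.subset_union_right) ha)
  have hK : σ x ∈ minReps cs K :=
    mem_minReps_of_mem_parab hσx fun i hi ↦ h.simple_notMem_parab_middle hi
  calc cs.length (w * a * (x * σ x)) = cs.length (w * x * (σ x * a)) := by
        rw [mul_assoc w, (h.commute_mul_map ha hx).eq]
        simp only [mul_assoc]
    _ = cs.length (w * x) + cs.length x + cs.length a := by
        rw [length_mul_of_mem_minReps (h.mul_mem_minReps hw hx) hmem,
          length_mul_of_mem_minReps hK ha, h.length_map hx, add_assoc]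

lemma length_le_of_inCoset (h : GoodSetup cs I J K σ) {w u : W} (hw : w ∈ minReps cs (J ∪ K))
    (hu : inCoset cs I K σ w u) : cs.length w ≤ cs.length u := by
  obtain ⟨a, ha, x, hx, rfl⟩ := hu
  rw [h.length_mul_mul_map hw ha hx]
  exact (cs.length_le_length_mul_add_right w x).trans (Nat.le_add_right _ _)

lemma exists_eq_mul_of_mem_MinC (h : GoodSetup cs I J K σ) {w u : W}
    (hw : w ∈ minReps cs (J ∪ K)) (hu : u ∈ MinC cs I K σ w) :
    ∃ p, ∃ x ∈ parab cs I, w = p * x ∧ u = p * (σ x)⁻¹ ∧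
      cs.length (p * x) = cs.length p + cs.length x := by
  obtain ⟨⟨a, ha, x, hx, rfl⟩, hlen⟩ := hu
  rw [h.length_mul_mul_map hw ha hx] at hlen
  have hle := cs.length_le_length_mul_add_right w x
  obtain rfl : a = 1 := cs.length_eq_zero_iff.mp (by omega)
  refine ⟨w * x, x⁻¹, inv_mem hx, by simp, by simp [h.map_inv hx, mul_assoc], ?_⟩
  rw [mul_inv_cancel_right, cs.length_inv]
  simpa using hlen.symm

lemma eq_of_inCoset (h : GoodSetup cs I J K σ) {w w' : W} (hw : w ∈ minReps cs (J ∪ K))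
    (hw' : w' ∈ minReps cs (J ∪ K)) (hcoset : inCoset cs I K σ w w') : w' = w := by
  have hcoset' := h.inCoset_of_inCoset (h.inCoset_refl w') hcoset
  have hlen : cs.length w' = cs.length w :=
    (h.length_le_of_inCoset hw' hcoset').antisymm (h.length_le_of_inCoset hw hcoset)
  obtain ⟨p, x, hx, rfl, rfl, hpx⟩ := h.exists_eq_mul_of_mem_MinC hw ⟨hcoset, hlen⟩
  have hσx : σ x ∈ parab cs (J ∪ K) :=
    Subgroup.closure_mono (Set.image_mono Set.subset_union_left) (h.bijSigma.mapsTo hx)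
  have hp := length_mul_of_mem_minReps hw' hσx
  rw [inv_mul_cancel_right, h.length_map hx, hlen, hpx] at hp
  obtain rfl : x = 1 := cs.length_eq_zero_iff.mp (by omega)
  simp [h.map_one]

end Coset

section Order

lemma leO_iff_of_mem_MinC (h : GoodSetup cs I J K σ) {w u : W} (hw : w ∈ minReps cs (J ∪ K))
    (hu : u ∈ MinC cs I K σ w) (w' : W) : leO cs I K σ w' w ↔ leO cs I K σ w' u := by
  have hlen := hu.2
  obtain ⟨p, x, hx, rfl, rfl, hpx⟩ := h.exists_eq_mul_of_mem_MinC hw hu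
  have hpσx : cs.length (p * (σ x)⁻¹) = cs.length p + cs.length (σ x)⁻¹ := by
    rw [hlen, hpx, cs.length_inv, h.length_map hx]
  constructor
  · rintro ⟨v, hv, hle⟩
    obtain ⟨a, b, ha, hb, rfl⟩ := hle.exists_eq_mul hpx
    have hbI := mem_parab_of_bruhatLE hb hx
    have hσb : BruhatLE cs (σ b) (σ x) := (h.bruhatLE_map_iff hx).mpr ⟨b, hbI, hb, rfl⟩
    refine ⟨a * (σ b)⁻¹, ?_, ha.mul hσb.inv hpσx⟩
    simpa [h.map_inv hbI, mul_assoc] using h.inCoset_mul_map hv (inv_mem hbI)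
  · rintro ⟨v, hv, hle⟩
    obtain ⟨a, c, ha, hc, rfl⟩ := hle.exists_eq_mul hpσx
    obtain ⟨b, hbI, hb, hbc⟩ := (h.bruhatLE_map_iff hx).mp (inv_inv (σ x) ▸ hc.inv)
    obtain rfl : c = (σ b)⁻¹ := by rw [hbc, inv_inv]
    refine ⟨a * b, ?_, ha.mul hb hpx⟩
    simpa [(h.commute_map hbI hbI).eq, mul_assoc] using h.inCoset_mul_map hv hbI

lemma ltO_iff_exists_bruhatLT (h : GoodSetup cs I J K σ) {w w' u : W}
    (hw : w ∈ minReps cs (J ∪ K)) (hw' : w' ∈ minReps cs (J ∪ K)) (hu : u ∈ MinC cs I K σ w) :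
    ltO cs I K σ w' w ↔ ∃ u', inCoset cs I K σ w' u' ∧ BruhatLT cs u' u := by
  rw [ltO, h.leO_iff_of_mem_MinC hw hu]
  constructor
  · rintro ⟨⟨u', hu', hle⟩, hne⟩
    refine ⟨u', hu', hle, ?_⟩
    rintro rfl
    exact hne (h.eq_of_inCoset hw hw' (h.inCoset_of_inCoset hu.1 hu'))
  · rintro ⟨u', hu', hlt⟩
    refine ⟨⟨u', hu', hlt.1⟩, ?_⟩
    rintro rfl
    exact (h.length_le_of_inCoset hw hu').not_gt (hu.2 ▸ hlt.length_lt)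

end Order

end GoodSetup

theorem statement_13 (cs : CoxeterSystem M W) (I J K : Set B) (σ : W → W)
    (h : GoodSetup cs I J K σ) (w w' : W)
    (hw : w ∈ minReps cs (J ∪ K)) (hw' : w' ∈ minReps cs (J ∪ K)) :
    (ltO cs I K σ w' w ↔
      ∃ u ∈ MinC cs I K σ w, ∃ u', inCoset cs I K σ w' u' ∧ BruhatLT cs u' u) ∧
    (ltO cs I K σ w' w ↔
      ∀ u ∈ MinC cs I K σ w, ∃ u', inCoset cs I K σ w' u' ∧ BruhatLT cs u' u) := by
  have key (u : W) (hu : u ∈ MinC cs I K σ w) := h.ltO_iff_exists_bruhatLT hw hw' hu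
  have hmem : w ∈ MinC cs I K σ w := ⟨h.inCoset_refl w, rfl⟩
  exact ⟨⟨fun hlt ↦ ⟨w, hmem, (key w hmem).mp hlt⟩, fun ⟨u, hu, hex⟩ ↦ (key u hu).mpr hex⟩,
    fun hlt u hu ↦ (key u hu).mp hlt, fun hall ↦ (key w hmem).mpr (hall w hmem)⟩

end BruhatSetup
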